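/- arXiv:2507.06214 — 6 statements merged into one kernel-verified Lean document; each statement's English description precedes it below -/
import Mathlib

section
/- Let (G, ·, ∘) be a skew brace. Then: (i) for every a ∈ G, the map λ_a is an automorphism of the group (G, ·); (ii) the map Ψ : a ↦ (a, λ_a) is an injective group homomorphism from (G, ∘) into Aff(G, ·); (iii) the image H = { (a, λ_a) : a ∈ G } is a regular subgroup of Aff(G, ·). In particular, (G, ∘) is isomorphic as a group to the regular subgroup H. -/
/-- The affine group `Aff(G, ·) = G ⋊ Aut(G, ·)`, the semidirect product of `G` with its
automorphism group acting by evaluation; multiplication is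
`(a, f)(b, g) = (a · f(b), f ∘ g)`. -/
abbrev Aff (G : Type*) [Group G] : Type _ :=
  SemidirectProduct G (MulAut G) (MonoidHom.id (MulAut G))

/-- A subgroup `H ≤ Aff(G, ·)` is *regular* if for each `a ∈ G` there is a unique
`(x, f) ∈ H` with `x · f(a) = 1`. -/
def IsRegularSubgroup {G : Type*} [Group G] (H : Subgroup (Aff G)) : Prop :=
  ∀ a : G, ∃! h : Aff G, h ∈ H ∧ h.left * h.right a = 1

/-- Let `(G, ·, ∘)` be a skew brace (`·` is the instance multiplication `*`,
`∘` is `Gc.mul`).  Then (i) for every `a`, the map `λ_a : b ↦ a⁻¹ · (a ∘ b)` is an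
automorphism `Λ a` of `(G, ·)`; (ii) `Ψ : a ↦ (a, λ_a)` is an injective group homomorphism
from `(G, ∘)` into `Aff(G, ·)`; (iii) its image `H` is a regular subgroup of `Aff(G, ·)`.
In particular `(G, ∘)` is isomorphic as a group to the regular subgroup `H`. -/
theorem skew_brace_lambda_regular_subgroup
    {G : Type*} (Gc : Group G) [Group G]
    (hcomp : ∀ a b c : G, Gc.mul a (b * c) = Gc.mul a b * a⁻¹ * Gc.mul a c) :
    ∃ Λ : G → MulAut G,
      (∀ a b : G, Λ a b = a⁻¹ * Gc.mul a b) ∧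
      Function.Injective (fun a : G => (⟨a, Λ a⟩ : Aff G)) ∧
      (∀ a b : G, (⟨Gc.mul a b, Λ (Gc.mul a b)⟩ : Aff G) =
        (⟨a, Λ a⟩ : Aff G) * (⟨b, Λ b⟩ : Aff G)) ∧
      ∃ H : Subgroup (Aff G),
        (H : Set (Aff G)) = Set.range (fun a : G => (⟨a, Λ a⟩ : Aff G)) ∧
        IsRegularSubgroup H ∧
        ∃ ψ : G → H, Function.Bijective ψ ∧
          ∀ a b : G, (ψ (Gc.mul a b) : Aff G) = ((ψ a : Aff G)) * ((ψ b : Aff G)) := by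
  have assoc : ∀ a b c : G, Gc.mul (Gc.mul a b) c = Gc.mul a (Gc.mul b c) :=
    fun a b c => Gc.mul_assoc a b c
  have m1 : ∀ a : G, Gc.mul a 1 = a := by
    intro a
    have h := hcomp a 1 1
    rw [mul_one, mul_assoc] at h
    have h2 : a⁻¹ * Gc.mul a 1 = 1 := left_eq_mul.mp h
    exact (inv_mul_eq_one.mp h2).symm
  have one_eq : Gc.one = (1 : G) := by
    have h1 : Gc.mul Gc.one 1 = 1 := Gc.one_mul 1
    rw [← m1 Gc.one, h1]
  have onem : ∀ a : G, Gc.mul 1 a = a := by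
    intro a
    rw [← one_eq]
    exact Gc.one_mul a
  have invm : ∀ a : G, Gc.mul (Gc.inv a) a = 1 := by
    intro a
    rw [← one_eq]
    exact Gc.inv_mul_cancel a
  have minv : ∀ a : G, Gc.mul a (Gc.inv a) = 1 := by
    intro a
    have h := invm (Gc.inv a)
    calc Gc.mul a (Gc.inv a)
        = Gc.mul (Gc.mul (Gc.inv (Gc.inv a)) (Gc.inv a)) (Gc.mul a (Gc.inv a)) := by
          rw [h, onem]
      _ = 1 := by rw [assoc, ← assoc (Gc.inv a), invm, onem, h]
  let Λ : G → MulAut G := fun a =>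
    { toFun := fun b => a⁻¹ * Gc.mul a b
      invFun := fun b => Gc.mul (Gc.inv a) (a * b)
      left_inv := by
        intro b
        change Gc.mul (Gc.inv a) (a * (a⁻¹ * Gc.mul a b)) = b
        rw [mul_inv_cancel_left, ← assoc, invm, onem]
      right_inv := by
        intro b
        change a⁻¹ * Gc.mul a (Gc.mul (Gc.inv a) (a * b)) = b
        rw [← assoc, minv, onem, inv_mul_cancel_left]
      map_mul' := by
        intro b c
        change a⁻¹ * Gc.mul a (b * c) = a⁻¹ * Gc.mul a b * (a⁻¹ * Gc.mul a c)
        rw [hcomp]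
        simp only [mul_assoc] }
  have hΛ : ∀ a b : G, Λ a b = a⁻¹ * Gc.mul a b := fun _ _ => rfl
  have hinj : Function.Injective (fun a : G => (⟨a, Λ a⟩ : Aff G)) :=
    fun a b h => congrArg SemidirectProduct.left h
  have hact : ∀ a b : G, a * Λ a b = Gc.mul a b := by
    intro a b
    rw [hΛ, mul_inv_cancel_left]
  have hmul : ∀ a b : G, (⟨Gc.mul a b, Λ (Gc.mul a b)⟩ : Aff G) =
        (⟨a, Λ a⟩ : Aff G) * (⟨b, Λ b⟩ : Aff G) := by
    intro a b
    apply SemidirectProduct.ext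
    · exact (hact a b).symm
    · apply MulEquiv.ext
      intro c
      change Λ (Gc.mul a b) c = Λ a (Λ b c)
      apply mul_left_cancel (a := Gc.mul a b)
      rw [hact, assoc, ← hact b c, ← hact a (b * Λ b c), map_mul, ← mul_assoc, hact]
  have hone : (⟨1, Λ 1⟩ : Aff G) = 1 := by
    have h := hmul 1 1
    rw [m1] at h
    exact left_eq_mul.mp h
  let H : Subgroup (Aff G) :=
    { carrier := Set.range (fun a : G => (⟨a, Λ a⟩ : Aff G))
      mul_mem' := by
        rintro _ _ ⟨a, rfl⟩ ⟨b, rfl⟩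
        exact ⟨Gc.mul a b, hmul a b⟩
      one_mem' := ⟨1, hone⟩
      inv_mem' := by
        rintro _ ⟨a, rfl⟩
        refine ⟨Gc.inv a, ?_⟩
        apply eq_inv_of_mul_eq_one_left
        change (⟨Gc.inv a, Λ (Gc.inv a)⟩ : Aff G) * (⟨a, Λ a⟩ : Aff G) = 1
        rw [← hmul, invm, hone] }
  refine ⟨Λ, hΛ, hinj, hmul, H, rfl, ?_, fun a => ⟨⟨a, Λ a⟩, a, rfl⟩, ⟨?_, ?_⟩, hmul⟩
  · intro a
    refine ⟨⟨Gc.inv a, Λ (Gc.inv a)⟩, ⟨⟨Gc.inv a, rfl⟩, ?_⟩, ?_⟩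
    · exact (hact _ _).trans (invm a)
    · rintro _ ⟨⟨b, rfl⟩, hb⟩
      have hb' : Gc.mul b a = 1 := (hact b a).symm.trans hb
      have : b = Gc.inv a := by
        rw [← m1 b, ← minv a, ← assoc, hb', onem]
      rw [this]
  · intro a b h
    exact hinj (congrArg Subtype.val h)
  · rintro ⟨_, a, rfl⟩
    exact ⟨a, rfl⟩
end

section
/- Let (G, ·) be a group and let H be a regular subgroup of Aff(G, ·). For each a ∈ G let (a, f_a) denote the unique element of H whose first coordinate is a (such an element exists and is unique because the first-coordinate projection restricted to H is a bijection onto G), and define a ∘ b := a · f_a(b). Then ∘ is a group operation on G, the triple (G, ·, ∘) is a skew brace, and the map a ↦ (a, f_a) is a group isomorphism from (G, ∘) onto H. -/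
/-- Let `H` be a regular subgroup of `Aff(G, ·)` and, for each `a ∈ G`, let
`(a, f a)` be the unique element of `H` with first coordinate `a`.  Define
`a ∘ b := a · (f a)(b)` (the operation `circ`).  Then `∘` is a group operation on `G`, the
triple `(G, ·, ∘)` is a skew brace, and `a ↦ (a, f a)` is a group isomorphism from `(G, ∘)`
onto `H`. -/
theorem regular_subgroup_gives_skew_brace
    {G : Type*} [Group G] (H : Subgroup (Aff G)) (hreg : IsRegularSubgroup H)
    (f : G → MulAut G)
    (hf : ∀ a : G, (⟨a, f a⟩ : Aff G) ∈ H)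
    (huniq : ∀ h ∈ H, h = ⟨h.left, f h.left⟩) :
    ∃ circ : G → G → G,
      (∃ Gc : Group G, Gc.mul = circ) ∧
      (∀ a b : G, circ a b = a * f a b) ∧
      (∀ a b c : G, circ a (b * c) = circ a b * a⁻¹ * circ a c) ∧
      Function.Injective (fun a : G => (⟨a, f a⟩ : Aff G)) ∧
      Set.range (fun a : G => (⟨a, f a⟩ : Aff G)) = (H : Set (Aff G)) ∧
      ∀ a b : G, (⟨circ a b, f (circ a b)⟩ : Aff G) =
        (⟨a, f a⟩ : Aff G) * (⟨b, f b⟩ : Aff G) := by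
  have key : ∀ a b : G, (⟨a * f a b, f (a * f a b)⟩ : Aff G) =
      (⟨a, f a⟩ : Aff G) * (⟨b, f b⟩ : Aff G) := fun a b =>
    (huniq _ (H.mul_mem (hf a) (hf b))).symm
  have hinj : Function.Injective (fun a : G => (⟨a, f a⟩ : Aff G)) := fun a b h =>
    congrArg SemidirectProduct.left h
  have h1 : (⟨1, f 1⟩ : Aff G) = 1 := (huniq 1 H.one_mem).symm
  have hassoc : ∀ a b c : G, (a * f a b) * f (a * f a b) c = a * f a (b * f b c) := by
    intro a b c
    apply hinj
    simp only [key]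
    exact mul_assoc _ _ _
  have hone : ∀ a : G, 1 * f 1 a = a := by
    intro a
    apply hinj
    simp only [key, h1]
    exact one_mul _
  have hinv : ∀ a : G, (((⟨a, f a⟩ : Aff G)⁻¹).left) *
      f (((⟨a, f a⟩ : Aff G)⁻¹).left) a = 1 := by
    intro a
    apply hinj
    have h := huniq _ (H.inv_mem (hf a))
    have h2 := key (((⟨a, f a⟩ : Aff G)⁻¹).left) a
    rw [← h, inv_mul_cancel] at h2
    exact h2.trans h1.symm
  refine ⟨fun a b => a * f a b, ?_, fun _ _ => rfl, ?_, hinj, ?_, key⟩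
  · exact ⟨@Group.ofLeftAxioms G ⟨fun a b => a * f a b⟩
      ⟨fun a => ((⟨a, f a⟩ : Aff G)⁻¹).left⟩ ⟨1⟩ hassoc hone hinv, rfl⟩
  · intro a b c
    simp [mul_assoc]
  · ext h
    constructor
    · rintro ⟨a, rfl⟩
      exact hf a
    · intro hh
      exact ⟨h.left, (huniq h hh).symm⟩
end

section
/- Let π : G̃ → G be a covering map with G̃ a connected topological space. Suppose G̃ carries two group operations · and ∘ with a common identity element ẽ, each making G̃ a topological group, suppose G carries two group operations · and ∘ making (G, ·, ∘) a skew brace, and suppose π is a group homomorphism both from (G̃, ·) to (G, ·) and from (G̃, ∘) to (G, ∘). Then the skew brace compatibility identity holds on G̃, i.e. (G̃, ·, ∘) is a skew brace. -/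
/-- Let `π : G̃ → G` be a covering map with `G̃` connected.  Suppose `G̃`
carries two topological group structures `Gd'` (`·`) and `Gc'` (`∘`) with a common identity,
`G` carries a skew brace structure `(Gd, Gc)`, and `π` is a homomorphism for both operations.
Then the skew brace compatibility identity holds on `G̃`, i.e. `(G̃, ·, ∘)` is a skew brace. -/
theorem skew_brace_lifts_to_cover
    {A B : Type*} [TopologicalSpace A] [TopologicalSpace B]
    (π : A → B) (hcov : IsCoveringMap π) (hconn : ConnectedSpace A)
    (Gd' Gc' : Group A)
    (hmuld' : Continuous fun p : A × A => Gd'.mul p.1 p.2)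
    (hinvd' : Continuous fun a : A => Gd'.inv a)
    (hmulc' : Continuous fun p : A × A => Gc'.mul p.1 p.2)
    (hinvc' : Continuous fun a : A => Gc'.inv a)
    (hone : Gd'.one = Gc'.one)
    (Gd Gc : Group B)
    (hcompB : ∀ a b c : B, Gc.mul a (Gd.mul b c) =
      Gd.mul (Gd.mul (Gc.mul a b) (Gd.inv a)) (Gc.mul a c))
    (hπd : ∀ x y : A, π (Gd'.mul x y) = Gd.mul (π x) (π y))
    (hπc : ∀ x y : A, π (Gc'.mul x y) = Gc.mul (π x) (π y)) :
    ∀ a b c : A, Gc'.mul a (Gd'.mul b c) =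
      Gd'.mul (Gd'.mul (Gc'.mul a b) (Gd'.inv a)) (Gc'.mul a c) := by
  have hinv : ∀ a : A, π (Gd'.inv a) = Gd.inv (π a) := fun a =>
    @MonoidHom.map_inv A B Gd' Gd.toDivisionMonoid (@MonoidHom.mk' A B Gd Gd'.toMonoid.toMulOneClass π hπd) a
  have hd1 : ∀ x, Gd'.mul Gd'.one x = x := Gd'.one_mul
  have hc1 : ∀ x, Gc'.mul Gd'.one x = x := by
    rw [hone]; exact Gc'.one_mul
  have hi1 : Gd'.inv Gd'.one = Gd'.one := @inv_one A Gd'.toDivisionMonoid.toDivInvOneMonoid.toInvOneClass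
  have hA : Continuous fun p : A × A × A => p.1 := continuous_fst
  have hB : Continuous fun p : A × A × A => p.2.1 := continuous_fst.comp continuous_snd
  have hC : Continuous fun p : A × A × A => p.2.2 := continuous_snd.comp continuous_snd
  have key := hcov.eq_of_comp_eq
    (g₁ := fun p : A × A × A => Gc'.mul p.1 (Gd'.mul p.2.1 p.2.2))
    (g₂ := fun p : A × A × A =>
      Gd'.mul (Gd'.mul (Gc'.mul p.1 p.2.1) (Gd'.inv p.1)) (Gc'.mul p.1 p.2.2))
    (hmulc'.comp (hA.prodMk (hmuld'.comp (hB.prodMk hC))))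
    (hmuld'.comp ((hmuld'.comp ((hmulc'.comp (hA.prodMk hB)).prodMk (hinvd'.comp hA))).prodMk
      (hmulc'.comp (hA.prodMk hC))))
    (by
      funext p
      simp only [Function.comp, hπd, hπc, hinv]
      exact hcompB _ _ _)
    (Gd'.one, Gd'.one, Gd'.one)
    (by simp only [hd1, hc1, hi1])
  intro a b c
  exact congrFun key (a, b, c)
end

section
/- Let (G, ·) be a group with subgroups G₁ and G₂ such that every element a ∈ G can be written uniquely as a = a₁ · a₂ with a₁ ∈ G₁ and a₂ ∈ G₂. Define a ∘ b := a₁ · b · a₂, where a = a₁ · a₂ is the unique such factorization of a. Then ∘ is a group operation on G, the triple (G, ·, ∘) is a skew brace, and the map Φ : G₁ × G₂ → G, (a₁, a₂) ↦ a₁ · a₂⁻¹, is a group isomorphism from the direct product group G₁ × G₂ onto (G, ∘). -/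
/-- Let `(G, ·)` be a group with subgroups `G₁`, `G₂` such that every
`a ∈ G` factors uniquely as `a = a₁ · a₂` with `a₁ ∈ G₁`, `a₂ ∈ G₂` (the factors being
`f₁ a` and `f₂ a`).  Define `a ∘ b := a₁ · b · a₂` (the operation `circ`).  Then `∘` is a
group operation on `G`, `(G, ·, ∘)` is a skew brace, and
`Φ : G₁ × G₂ → G, (a₁, a₂) ↦ a₁ · a₂⁻¹` is a group isomorphism from the direct product
`G₁ × G₂` onto `(G, ∘)`. -/
theorem exact_factorization_skew_brace
    {G : Type*} [Group G] (G₁ G₂ : Subgroup G)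
    (f₁ : G → G₁) (f₂ : G → G₂)
    (hf : ∀ a : G, (f₁ a : G) * (f₂ a : G) = a)
    (huniq : ∀ (a : G) (b₁ : G₁) (b₂ : G₂), (b₁ : G) * (b₂ : G) = a → b₁ = f₁ a ∧ b₂ = f₂ a) :
    ∃ circ : G → G → G,
      (∃ Gc : Group G, Gc.mul = circ) ∧
      (∀ a b : G, circ a b = (f₁ a : G) * b * (f₂ a : G)) ∧
      (∀ a b c : G, circ a (b * c) = circ a b * a⁻¹ * circ a c) ∧
      Function.Bijective (fun p : G₁ × G₂ => (p.1 : G) * (p.2 : G)⁻¹) ∧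
      (∀ p q : G₁ × G₂, ((p * q).1 : G) * (((p * q).2 : G))⁻¹ =
        circ ((p.1 : G) * ((p.2 : G))⁻¹) ((q.1 : G) * ((q.2 : G))⁻¹)) := by
  have key : ∀ (b₁ : G₁) (b₂ : G₂), f₁ ((b₁ : G) * b₂) = b₁ ∧ f₂ ((b₁ : G) * b₂) = b₂ :=
    fun b₁ b₂ => ⟨(huniq _ b₁ b₂ rfl).1.symm, (huniq _ b₁ b₂ rfl).2.symm⟩
  have hc : ∀ a b : G, f₁ ((f₁ a : G) * b * f₂ a) = f₁ a * f₁ b ∧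
      f₂ ((f₁ a : G) * b * f₂ a) = f₂ b * f₂ a := by
    intro a b
    have h : (f₁ a : G) * b * f₂ a = ((f₁ a * f₁ b : G₁) : G) * ((f₂ b * f₂ a : G₂) : G) := by
      simp only [Subgroup.coe_mul, mul_assoc]
      rw [← mul_assoc (f₁ b : G), hf b]
    rw [h]
    exact key _ _
  have h1 : f₁ 1 = 1 ∧ f₂ 1 = 1 := by simpa using key 1 1
  refine ⟨fun a b => (f₁ a : G) * b * f₂ a, ⟨@Group.ofLeftAxioms G
    ⟨fun a b => (f₁ a : G) * b * f₂ a⟩ ⟨fun a => (f₁ a : G)⁻¹ * (f₂ a : G)⁻¹⟩ ⟨1⟩ ?_ ?_ ?_, rfl⟩,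
    fun _ _ => rfl, ?_, ⟨?_, ?_⟩, ?_⟩
  · intro a b c
    change (f₁ ((f₁ a : G) * b * f₂ a) : G) * c * f₂ ((f₁ a : G) * b * f₂ a)
      = (f₁ a : G) * ((f₁ b : G) * c * f₂ b) * f₂ a
    rw [(hc a b).1, (hc a b).2]
    simp [mul_assoc]
  · intro a
    change (f₁ 1 : G) * a * f₂ 1 = a
    simp [h1.1, h1.2]
  · intro a
    change (f₁ ((f₁ a : G)⁻¹ * (f₂ a : G)⁻¹) : G) * a * f₂ ((f₁ a : G)⁻¹ * (f₂ a : G)⁻¹) = 1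
    have h := key (f₁ a)⁻¹ (f₂ a)⁻¹
    simp only [Subgroup.coe_inv] at h
    rw [h.1, h.2]
    conv_lhs => enter [1, 2]; rw [← hf a]
    simp
  · intro a b c
    have h : a⁻¹ = (f₂ a : G)⁻¹ * (f₁ a : G)⁻¹ := by
      conv_lhs => rw [← hf a]
      simp
    simp only [h]
    group
  · rintro ⟨a, b⟩ ⟨c, d⟩ h
    have h' : (a : G) * ((b⁻¹ : G₂) : G) = (c : G) * ((d⁻¹ : G₂) : G) := by simpa using h
    have k1 := key a b⁻¹
    have k2 := key c d⁻¹
    rw [h'] at k1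
    exact Prod.ext (k1.1.symm.trans k2.1) (inv_injective (k1.2.symm.trans k2.2))
  · intro a
    exact ⟨(f₁ a, (f₂ a)⁻¹), by simp [hf]⟩
  · rintro ⟨a, b⟩ ⟨c, d⟩
    have k := key a b⁻¹
    simp only [Subgroup.coe_inv] at k
    simp [k.1, k.2, mul_assoc]
end

section
/- Let SL₂(ℝ) denote the group of 2×2 real matrices of determinant 1 under matrix multiplication ·. There exists a group operation ∘ on SL₂(ℝ) such that the triple (SL₂(ℝ), ·, ∘) is a skew brace and the group (SL₂(ℝ), ∘) is solvable; moreover ∘ can be chosen to be continuous (it is induced, via the exact Iwasawa factorization SL₂(ℝ) = K·AN with K = SO(2) and AN the subgroup of upper triangular matrices of determinant 1 with positive diagonal, by the rule a ∘ b = a₁ · b · a₂ where a = a₁a₂, a₁ ∈ K, a₂ ∈ AN). -/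
open Matrix

/-- The subspace topology on `SL₂(ℝ)`, induced from the space of `2 × 2` real matrices. -/
noncomputable instance : TopologicalSpace (Matrix.SpecialLinearGroup (Fin 2) ℝ) :=
  TopologicalSpace.induced (fun A => (A : Matrix (Fin 2) (Fin 2) ℝ)) inferInstance

/-- Elements of `SO(2)`. -/
def IwK (a : Matrix.SpecialLinearGroup (Fin 2) ℝ) : Prop :=
  (a : Matrix (Fin 2) (Fin 2) ℝ) * (a : Matrix (Fin 2) (Fin 2) ℝ)ᵀ = 1

/-- Elements of `AN`. -/
def IwAN (a : Matrix.SpecialLinearGroup (Fin 2) ℝ) : Prop :=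
  (a : Matrix (Fin 2) (Fin 2) ℝ) 1 0 = 0 ∧ 0 < (a : Matrix (Fin 2) (Fin 2) ℝ) 0 0

theorem SL2.det_eq (a : Matrix.SpecialLinearGroup (Fin 2) ℝ) :
    a.1 0 0 * a.1 1 1 - a.1 0 1 * a.1 1 0 = 1 := by
  rw [← Matrix.det_fin_two]; exact a.2

theorem SL2.pos (a : Matrix.SpecialLinearGroup (Fin 2) ℝ) :
    0 < a.1 0 0 ^ 2 + a.1 1 0 ^ 2 := by
  have h := SL2.det_eq a
  by_contra hn
  have h0 : a.1 0 0 = 0 := by nlinarith [sq_nonneg (a.1 0 0), sq_nonneg (a.1 1 0)]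
  have h1 : a.1 1 0 = 0 := by nlinarith [sq_nonneg (a.1 0 0), sq_nonneg (a.1 1 0)]
  rw [h0, h1] at h
  norm_num at h

/-- The matrix of `a ∘ b`, in rational form. -/
noncomputable def circM (a b : Matrix (Fin 2) (Fin 2) ℝ) : Matrix (Fin 2) (Fin 2) ℝ :=
  !![a 0 0 * b 0 0 - a 1 0 * b 1 0,
     (a 0 0 * ((a 0 0 * a 0 1 + a 1 0 * a 1 1) * b 0 0 + b 0 1)
       - a 1 0 * ((a 0 0 * a 0 1 + a 1 0 * a 1 1) * b 1 0 + b 1 1)) / (a 0 0 ^ 2 + a 1 0 ^ 2);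
     a 1 0 * b 0 0 + a 0 0 * b 1 0,
     (a 1 0 * ((a 0 0 * a 0 1 + a 1 0 * a 1 1) * b 0 0 + b 0 1)
       + a 0 0 * ((a 0 0 * a 0 1 + a 1 0 * a 1 1) * b 1 0 + b 1 1)) / (a 0 0 ^ 2 + a 1 0 ^ 2)]

/-- The operation `a ∘ b`. -/
noncomputable def circS (a b : Matrix.SpecialLinearGroup (Fin 2) ℝ) :
    Matrix.SpecialLinearGroup (Fin 2) ℝ :=
  ⟨circM a.1 b.1, by
    have h := SL2.pos a
    have hb := SL2.det_eq b
    rw [Matrix.det_fin_two]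
    simp only [circM, Matrix.of_apply, Matrix.cons_val', Matrix.cons_val_zero,
      Matrix.cons_val_one, Matrix.cons_val_fin_one]
    field_simp
    linear_combination (a.1 0 0 ^ 2 + a.1 1 0 ^ 2) * hb⟩

theorem IwK.entries {a : Matrix.SpecialLinearGroup (Fin 2) ℝ} (h : IwK a) :
    a.1 0 1 = - a.1 1 0 ∧ a.1 1 1 = a.1 0 0 ∧ a.1 0 0 ^ 2 + a.1 1 0 ^ 2 = 1 := by
  have hd := SL2.det_eq a
  have h00 := congrFun (congrFun h 0) 0
  have h01 := congrFun (congrFun h 0) 1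
  have h11 := congrFun (congrFun h 1) 1
  simp [Matrix.mul_apply, Fin.sum_univ_two] at h00 h01 h11
  have e1 : a.1 0 1 = - a.1 1 0 := by
    nlinarith [sq_nonneg (a.1 0 1 + a.1 1 0), sq_nonneg (a.1 0 0 - a.1 1 1)]
  have e2 : a.1 1 1 = a.1 0 0 := by
    nlinarith [sq_nonneg (a.1 0 1 + a.1 1 0), sq_nonneg (a.1 0 0 - a.1 1 1)]
  refine ⟨e1, e2, ?_⟩
  rw [e1, e2] at hd
  linarith

theorem circS_spec (a b a₁ a₂ : Matrix.SpecialLinearGroup (Fin 2) ℝ) (h1 : IwK a₁)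
    (h2 : IwAN a₂) (ha : a = a₁ * a₂) : circS a b = a₁ * b * a₂ := by
  obtain ⟨e1, e2, e3⟩ := h1.entries
  obtain ⟨f1, f2⟩ := h2
  have hd := SL2.det_eq a₂
  have hp := SL2.pos a
  subst ha
  change a₂.1 1 0 = 0 at f1
  rw [f1] at hd
  have f3 : a₂.1 0 0 * a₂.1 1 1 = 1 := by linarith
  have hr : ((a₁ * a₂).1 0 0 ^ 2 + (a₁ * a₂).1 1 0 ^ 2) = a₂.1 0 0 ^ 2 := by
    simp only [Matrix.SpecialLinearGroup.coe_mul, Matrix.mul_apply, Fin.sum_univ_two]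
    rw [f1]
    linear_combination a₂.1 0 0 ^ 2 * e3
  have hne : a₂.1 0 0 ≠ 0 := ne_of_gt f2
  have f4 : a₂.1 1 1 = (a₂.1 0 0)⁻¹ := eq_inv_of_mul_eq_one_right f3
  have ht : (a₁ * a₂).1 0 0 * (a₁ * a₂).1 0 1 + (a₁ * a₂).1 1 0 * (a₁ * a₂).1 1 1
      = a₂.1 0 0 * a₂.1 0 1 := by
    simp only [Matrix.SpecialLinearGroup.coe_mul, Matrix.mul_apply, Fin.sum_univ_two]
    rw [f1, e1, e2]
    linear_combination a₂.1 0 0 * a₂.1 0 1 * e3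
  apply Subtype.ext
  change circM (a₁ * a₂).1 b.1 = a₁.1 * b.1 * a₂.1
  unfold circM
  rw [hr, ht]
  ext i j
  fin_cases i <;> fin_cases j <;>
    simp [Matrix.mul_apply, Fin.sum_univ_two, f1, e1, e2, f4] <;> field_simp <;> ring

theorem SL2.iwasawa (a : Matrix.SpecialLinearGroup (Fin 2) ℝ) :
    ∃ a₁ a₂, IwK a₁ ∧ IwAN a₂ ∧ a = a₁ * a₂ := by
  have hp := SL2.pos a
  have hd := SL2.det_eq a
  obtain ⟨r, hr, hr2⟩ : ∃ r : ℝ, 0 < r ∧ r ^ 2 = a.1 0 0 ^ 2 + a.1 1 0 ^ 2 :=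
    ⟨_, Real.sqrt_pos.2 hp, Real.sq_sqrt hp.le⟩
  have hne := hr.ne'
  refine ⟨⟨!![a.1 0 0 / r, - a.1 1 0 / r; a.1 1 0 / r, a.1 0 0 / r], ?_⟩,
    ⟨!![r, (a.1 0 0 * a.1 0 1 + a.1 1 0 * a.1 1 1) / r; 0, 1 / r], ?_⟩, ?_, ?_, ?_⟩
  · rw [Matrix.det_fin_two_of]
    field_simp
    linarith
  · rw [Matrix.det_fin_two_of]
    field_simp
    ring
  · unfold IwK
    ext i j
    fin_cases i <;> fin_cases j <;>
      simp [Matrix.mul_apply, Fin.sum_univ_two] <;> field_simp <;> linarith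
  · exact ⟨by simp, by simpa using hr⟩
  · apply Subtype.ext
    change a.1 = !![a.1 0 0 / r, - a.1 1 0 / r; a.1 1 0 / r, a.1 0 0 / r] *
      !![r, (a.1 0 0 * a.1 0 1 + a.1 1 0 * a.1 1 1) / r; 0, 1 / r]
    ext i j
    fin_cases i <;> fin_cases j
    · simp [Matrix.mul_apply, Fin.sum_univ_two]
      field_simp
    · simp [Matrix.mul_apply, Fin.sum_univ_two]
      field_simp
      linear_combination a.1 0 1 * hr2 - a.1 1 0 * hd
    · simp [Matrix.mul_apply, Fin.sum_univ_two]
      field_simp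
    · simp [Matrix.mul_apply, Fin.sum_univ_two]
      field_simp
      linear_combination a.1 1 1 * hr2 + a.1 0 0 * hd

theorem IwK.mul {a b : Matrix.SpecialLinearGroup (Fin 2) ℝ} (ha : IwK a) (hb : IwK b) :
    IwK (a * b) := by
  unfold IwK at *
  rw [Matrix.SpecialLinearGroup.coe_mul, Matrix.transpose_mul, Matrix.mul_assoc,
    ← Matrix.mul_assoc b.1, hb, Matrix.one_mul, ha]

theorem IwK.one : IwK 1 := by simp [IwK]

theorem IwK.inv {a : Matrix.SpecialLinearGroup (Fin 2) ℝ} (ha : IwK a) : IwK a⁻¹ := by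
  obtain ⟨e1, e2, e3⟩ := ha.entries
  unfold IwK
  rw [Matrix.SpecialLinearGroup.coe_inv, Matrix.adjugate_fin_two]
  ext i j
  fin_cases i <;> fin_cases j <;>
    simp [Matrix.mul_apply, Fin.sum_univ_two, e1, e2] <;> linarith

theorem IwAN.mul {a b : Matrix.SpecialLinearGroup (Fin 2) ℝ} (ha : IwAN a) (hb : IwAN b) :
    IwAN (a * b) := by
  obtain ⟨h1, h2⟩ := ha
  obtain ⟨h3, h4⟩ := hb
  constructor
  · simp [Matrix.mul_apply, Fin.sum_univ_two, h1, h3]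
  · simp only [Matrix.SpecialLinearGroup.coe_mul, Matrix.mul_apply, Fin.sum_univ_two, h3]
    simpa using mul_pos h2 h4

theorem IwAN.one : IwAN 1 := by simp [IwAN]

theorem IwAN.inv {a : Matrix.SpecialLinearGroup (Fin 2) ℝ} (ha : IwAN a) : IwAN a⁻¹ := by
  obtain ⟨h1, h2⟩ := ha
  have hd := SL2.det_eq a
  change a.1 1 0 = 0 at h1
  rw [h1] at hd
  unfold IwAN
  rw [Matrix.SpecialLinearGroup.coe_inv, Matrix.adjugate_fin_two]
  constructor
  · simpa using h1
  · change 0 < a.1 1 1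
    by_contra hn
    nlinarith [mul_nonneg h2.le (sub_nonneg.2 (not_lt.1 hn))]

theorem circS_assoc (a b c : Matrix.SpecialLinearGroup (Fin 2) ℝ) :
    circS (circS a b) c = circS a (circS b c) := by
  obtain ⟨a₁, a₂, ha1, ha2, ha⟩ := SL2.iwasawa a
  obtain ⟨b₁, b₂, hb1, hb2, hb⟩ := SL2.iwasawa b
  rw [circS_spec a b a₁ a₂ ha1 ha2 ha, circS_spec a _ a₁ a₂ ha1 ha2 ha,
    circS_spec b c b₁ b₂ hb1 hb2 hb,
    circS_spec _ c (a₁ * b₁) (b₂ * a₂) (ha1.mul hb1) (hb2.mul ha2) (by rw [hb]; group)]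
  group

theorem circS_one_left (a : Matrix.SpecialLinearGroup (Fin 2) ℝ) : circS 1 a = a := by
  rw [circS_spec 1 a 1 1 IwK.one IwAN.one (by simp)]; simp

theorem circS_one_right (a : Matrix.SpecialLinearGroup (Fin 2) ℝ) : circS a 1 = a := by
  obtain ⟨a₁, a₂, ha1, ha2, ha⟩ := SL2.iwasawa a
  rw [circS_spec a 1 a₁ a₂ ha1 ha2 ha, ha]; simp

theorem circS_inv (a : Matrix.SpecialLinearGroup (Fin 2) ℝ) : ∃ b, circS b a = 1 := by
  obtain ⟨a₁, a₂, ha1, ha2, ha⟩ := SL2.iwasawa a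
  refine ⟨a₁⁻¹ * a₂⁻¹, ?_⟩
  rw [circS_spec _ a a₁⁻¹ a₂⁻¹ ha1.inv ha2.inv rfl, ha]; group

/-- A type copy of `SL₂(ℝ)` carrying the group operation `∘`. -/
def CircSL : Type := Matrix.SpecialLinearGroup (Fin 2) ℝ

/-- The group `(SL₂(ℝ), ∘)`. -/
noncomputable instance CircSL.group : Group CircSL where
  mul := circS
  mul_assoc := circS_assoc
  one := (1 : Matrix.SpecialLinearGroup (Fin 2) ℝ)
  one_mul := circS_one_left
  mul_one := circS_one_right
  inv a := Classical.choose (circS_inv a)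
  inv_mul_cancel a := Classical.choose_spec (circS_inv a)

/-- The first column as a complex number: a homomorphism for `∘`. -/
noncomputable def CircSL.toComplex : CircSL →* ℂ where
  toFun a := ⟨a.1 0 0, a.1 1 0⟩
  map_one' := by
    change (⟨(1 : Matrix (Fin 2) (Fin 2) ℝ) 0 0, (1 : Matrix (Fin 2) (Fin 2) ℝ) 1 0⟩ : ℂ) = 1
    apply Complex.ext <;> simp
  map_mul' a b := by
    change (⟨circM a.1 b.1 0 0, circM a.1 b.1 1 0⟩ : ℂ) = _
    apply Complex.ext
    · simp [circM]
    · simp [circM]; ring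

theorem CircSL.mem_ker {a : CircSL} (h : a ∈ CircSL.toComplex.toHomUnits.ker) :
    a.1 0 0 = 1 ∧ a.1 1 0 = 0 ∧ a.1 1 1 = 1 := by
  have h' : CircSL.toComplex a = 1 := by
    have := congrArg Units.val (MonoidHom.mem_ker.1 h)
    simpa using this
  have h0 : a.1 0 0 = 1 := congrArg Complex.re h'
  have h1 : a.1 1 0 = 0 := congrArg Complex.im h'
  have hd := SL2.det_eq a
  refine ⟨h0, h1, ?_⟩
  change a.1 0 0 * a.1 1 1 - a.1 0 1 * a.1 1 0 = 1 at hd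
  rw [h0, h1] at hd
  linarith

theorem CircSL.solvable : Group.IsSolvable CircSL := by
  have hk : Group.IsSolvable CircSL.toComplex.toHomUnits.ker := by
    apply Group.isSolvable_of_comm
    rintro ⟨a, ha⟩ ⟨b, hb⟩
    obtain ⟨a0, a1, a2⟩ := CircSL.mem_ker ha
    obtain ⟨b0, b1, b2⟩ := CircSL.mem_ker hb
    apply Subtype.ext
    apply Subtype.ext
    change circM a.1 b.1 = circM b.1 a.1
    simp [circM, a0, a1, a2, b0, b1, b2, add_comm]
  exact Group.isSolvable_of_ker_le_range (CircSL.toComplex.toHomUnits.ker.subtype)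
    CircSL.toComplex.toHomUnits (by simp)

theorem circS_continuous : Continuous (fun p : Matrix.SpecialLinearGroup (Fin 2) ℝ ×
    Matrix.SpecialLinearGroup (Fin 2) ℝ => circS p.1 p.2) := by
  have hc : Continuous (fun A : Matrix.SpecialLinearGroup (Fin 2) ℝ =>
      (A.1 : Matrix (Fin 2) (Fin 2) ℝ)) := continuous_induced_dom
  have he : ∀ i j, Continuous (fun A : Matrix.SpecialLinearGroup (Fin 2) ℝ => A.1 i j) :=
    fun i j => hc.matrix_elem i j
  have h1 : ∀ i j, Continuous (fun p : Matrix.SpecialLinearGroup (Fin 2) ℝ ×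
      Matrix.SpecialLinearGroup (Fin 2) ℝ => p.1.1 i j) :=
    fun i j => (he i j).comp continuous_fst
  have h2 : ∀ i j, Continuous (fun p : Matrix.SpecialLinearGroup (Fin 2) ℝ ×
      Matrix.SpecialLinearGroup (Fin 2) ℝ => p.2.1 i j) :=
    fun i j => (he i j).comp continuous_snd
  refine continuous_induced_rng.2 ?_
  change Continuous (fun p : Matrix.SpecialLinearGroup (Fin 2) ℝ ×
    Matrix.SpecialLinearGroup (Fin 2) ℝ => circM p.1.1 p.2.1)
  refine continuous_matrix ?_
  intro i j
  fin_cases i <;> fin_cases j <;> simp [circM]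
  · fun_prop
  · exact Continuous.div (by fun_prop) (by fun_prop) (fun p => ne_of_gt (SL2.pos p.1))
  · fun_prop
  · exact Continuous.div (by fun_prop) (by fun_prop) (fun p => ne_of_gt (SL2.pos p.1))

/-- Let `SL₂(ℝ)` be the group of `2 × 2` real matrices of determinant `1`
under matrix multiplication `·`.  There is a group operation `∘` (`circ`) on `SL₂(ℝ)` such
that `(SL₂(ℝ), ·, ∘)` is a skew brace and `(SL₂(ℝ), ∘)` is solvable; moreover `∘` is
continuous and is induced by the exact Iwasawa factorization `SL₂(ℝ) = K · AN`
(`K = SO(2)` the orthogonal elements, `AN` the upper triangular matrices of determinant `1`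
with positive diagonal) via the rule `a ∘ b = a₁ · b · a₂` whenever `a = a₁ a₂` with
`a₁ ∈ K`, `a₂ ∈ AN`. -/
theorem skew_brace_on_SL2R :
    ∃ circ : Matrix.SpecialLinearGroup (Fin 2) ℝ → Matrix.SpecialLinearGroup (Fin 2) ℝ →
        Matrix.SpecialLinearGroup (Fin 2) ℝ,
      (∃ Gc : Group (Matrix.SpecialLinearGroup (Fin 2) ℝ), Gc.mul = circ ∧
        @IsSolvable (Matrix.SpecialLinearGroup (Fin 2) ℝ) Gc) ∧
      (∀ a b c : Matrix.SpecialLinearGroup (Fin 2) ℝ,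
        circ a (b * c) = circ a b * a⁻¹ * circ a c) ∧
      Continuous (fun p : Matrix.SpecialLinearGroup (Fin 2) ℝ ×
        Matrix.SpecialLinearGroup (Fin 2) ℝ => circ p.1 p.2) ∧
      (∀ a b a₁ a₂ : Matrix.SpecialLinearGroup (Fin 2) ℝ,
        (a₁ : Matrix (Fin 2) (Fin 2) ℝ) * (a₁ : Matrix (Fin 2) (Fin 2) ℝ)ᵀ = 1 →
        ((a₂ : Matrix (Fin 2) (Fin 2) ℝ) 1 0 = 0 ∧
          0 < (a₂ : Matrix (Fin 2) (Fin 2) ℝ) 0 0) →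
        a = a₁ * a₂ → circ a b = a₁ * b * a₂) := by
  refine ⟨circS, ⟨CircSL.group, rfl, CircSL.solvable⟩, ?_, circS_continuous, ?_⟩
  · intro a b c
    obtain ⟨a₁, a₂, ha1, ha2, ha⟩ := SL2.iwasawa a
    rw [circS_spec a _ a₁ a₂ ha1 ha2 ha, circS_spec a b a₁ a₂ ha1 ha2 ha,
      circS_spec a c a₁ a₂ ha1 ha2 ha, ha]
    group
  · intro a b a₁ a₂ h1 h2 ha
    exact circS_spec a b a₁ a₂ h1 h2 ha
end

section
/- Let H₃ be the three-dimensional Heisenberg group, i.e. ℝ³ with the multiplication (x, y, z) · (x', y', z') = (x + x', y + y', z + z' + x y'). Then there exists a group operation ∘ on ℝ³ such that the triple (H₃, ·, ∘) is a skew brace and the group (ℝ³, ∘) is abelian; moreover the group (H₃, ·) is nilpotent and non-abelian. -/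
/-- The Heisenberg group structure on `ℝ³`. -/
@[reducible]
noncomputable def heisGroup : Group (ℝ × ℝ × ℝ) :=
  @Group.ofLeftAxioms (ℝ × ℝ × ℝ)
    ⟨fun p q => (p.1 + q.1, p.2.1 + q.2.1, p.2.2 + q.2.2 + p.1 * q.2.1)⟩
    ⟨fun p => (-p.1, -p.2.1, -p.2.2 + p.1 * p.2.1)⟩
    ⟨(0, 0, 0)⟩
    (fun a b c => by
      simp only [HMul.hMul, Prod.mk.injEq]
      refine ⟨add_assoc _ _ _, add_assoc _ _ _, ?_⟩
      change a.2.2 + b.2.2 + a.1 * b.2.1 + c.2.2 + (a.1 + b.1) * c.2.1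
        = a.2.2 + (b.2.2 + c.2.2 + b.1 * c.2.1) + a.1 * (b.2.1 + c.2.1)
      ring)
    (fun a => by
      change ((0:ℝ) + a.1, (0:ℝ) + a.2.1, (0:ℝ) + a.2.2 + 0 * a.2.1) = a
      simp)
    (fun a => by
      change (-a.1 + a.1, -a.2.1 + a.2.1, -a.2.2 + a.1 * a.2.1 + a.2.2 + -a.1 * a.2.1)
        = ((0:ℝ), (0:ℝ), (0:ℝ))
      simp)

theorem heisGroup_nilpotent : @Group.IsNilpotent (ℝ × ℝ × ℝ) heisGroup := by
  letI := heisGroup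
  have hmul : ∀ p q : ℝ × ℝ × ℝ, heisGroup.mul p q =
      (p.1 + q.1, p.2.1 + q.2.1, p.2.2 + q.2.2 + p.1 * q.2.1) := fun _ _ => rfl
  have hinv : ∀ p : ℝ × ℝ × ℝ, heisGroup.inv p =
      (-p.1, -p.2.1, -p.2.2 + p.1 * p.2.1) := fun _ => rfl
  refine ⟨2, ?_⟩
  rw [Subgroup.eq_top_iff']
  intro x
  rw [Subgroup.mem_upperCentralSeries_succ_iff]
  intro y
  rw [Subgroup.upperCentralSeries_one, Subgroup.mem_center_iff]
  intro g
  change heisGroup.mul g (heisGroup.mul (heisGroup.mul (heisGroup.mul x y)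
    (heisGroup.inv x)) (heisGroup.inv y)) = heisGroup.mul (heisGroup.mul (heisGroup.mul
    (heisGroup.mul x y) (heisGroup.inv x)) (heisGroup.inv y)) g
  simp only [hmul, hinv, Prod.mk.injEq]
  refine ⟨?_, ?_, ?_⟩ <;> ring

/-- Let `H₃` be the three-dimensional Heisenberg group, i.e. `ℝ³` with the
multiplication `(x, y, z) · (x', y', z') = (x + x', y + y', z + z' + x y')` (the group
structure `Gd`).  Then there is a group operation `∘` (`Gc`) on `ℝ³` such that `(H₃, ·, ∘)`
is a skew brace and `(ℝ³, ∘)` is abelian; moreover `(H₃, ·)` is nilpotent and non-abelian. -/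
theorem heisenberg_skew_brace :
    ∃ Gd : Group (ℝ × ℝ × ℝ),
      (∀ p q : ℝ × ℝ × ℝ, Gd.mul p q =
        (p.1 + q.1, p.2.1 + q.2.1, p.2.2 + q.2.2 + p.1 * q.2.1)) ∧
      (∃ Gc : Group (ℝ × ℝ × ℝ),
        (∀ a b c : ℝ × ℝ × ℝ, Gc.mul a (Gd.mul b c) =
          Gd.mul (Gd.mul (Gc.mul a b) (Gd.inv a)) (Gc.mul a c)) ∧
        (∀ a b : ℝ × ℝ × ℝ, Gc.mul a b = Gc.mul b a)) ∧
      @Group.IsNilpotent (ℝ × ℝ × ℝ) Gd ∧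
      (∃ a b : ℝ × ℝ × ℝ, Gd.mul a b ≠ Gd.mul b a) := by
  refine ⟨heisGroup, fun _ _ => rfl, ⟨(inferInstance : Group (Multiplicative (ℝ × ℝ × ℝ))),
    ?_, ?_⟩, heisGroup_nilpotent, (1, 0, 0), (0, 1, 0), ?_⟩
  · intro a b c
    change (a.1 + (b.1 + c.1), a.2.1 + (b.2.1 + c.2.1),
      a.2.2 + (b.2.2 + c.2.2 + b.1 * c.2.1)) =
      (a.1 + b.1 + -a.1 + (a.1 + c.1), a.2.1 + b.2.1 + -a.2.1 + (a.2.1 + c.2.1),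
        a.2.2 + b.2.2 + (-a.2.2 + a.1 * a.2.1) + (a.1 + b.1) * -a.2.1 + (a.2.2 + c.2.2)
          + (a.1 + b.1 + -a.1) * (a.2.1 + c.2.1))
    simp only [Prod.mk.injEq]
    refine ⟨?_, ?_, ?_⟩ <;> ring
  · exact fun a b => add_comm (G := ℝ × ℝ × ℝ) a b
  · intro h
    have h2 : (0:ℝ) + 0 + 1 * 1 = 0 + 0 + 0 * 0 := congrArg (fun p => p.2.2) h
    norm_num at h2
end
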